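/- arXiv:1711.01964 — 4 statements merged into one kernel-verified Lean document; each statement's English description precedes it below -/
import Mathlib

section
/- Let 𝔤 be a Lie algebra over a field K of characteristic zero with Z(𝔤) ⊆ [𝔤,𝔤]. Let x·y be any symmetric K-bilinear product on 𝔤 such that x·y ∈ Z(𝔤) for all x,y ∈ 𝔤, and x·y = 0 whenever x ∈ [𝔤,𝔤] or y ∈ [𝔤,𝔤]. Then x·y is a CPA-structure on 𝔤; in particular, on the free-nilpotent Lie algebra F_{g,c} any symmetric bilinear assignment of central values to products of the free generators (with all other products of basis elements zero) defines a central CPA-structure. -/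
/-- A commutative post-Lie algebra structure (CPA-structure) on a Lie algebra `L` over `K`:
a bilinear product `x·y` such that (1) `x·y = y·x`, (2) `⁅x,y⁆·z = x·(y·z) - y·(x·z)`,
(3) `x·⁅y,z⁆ = ⁅x·y,z⁆ + ⁅y,x·z⁆`. -/
structure IsCPAStructure (K : Type*) {L : Type*} [CommRing K] [LieRing L] [LieAlgebra K L]
    (mul : L →ₗ[K] L →ₗ[K] L) : Prop where
  comm : ∀ x y : L, mul x y = mul y x
  bracket_mul : ∀ x y z : L, mul ⁅x, y⁆ z = mul x (mul y z) - mul y (mul x z)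
  mul_bracket : ∀ x y z : L, mul x ⁅y, z⁆ = ⁅mul x y, z⁆ + ⁅y, mul x z⁆

section

variable {K L M : Type*} [CommRing K] [LieRing L] [LieAlgebra K L]
  [AddCommGroup M] [Module K M] [LieRingModule L M] [LieModule K L M]

theorem lie_mem_derived (x y : L) : ⁅x, y⁆ ∈ ⁅(⊤ : LieIdeal K L), (⊤ : LieIdeal K L)⁆ :=
  LieSubmodule.lie_mem_lie (LieSubmodule.mem_top x) (LieSubmodule.mem_top y)

theorem leibniz_of_trivial_values_vanishing_on_derived {f : L →ₗ[K] M}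
    (htriv : ∀ x, f x ∈ LieModule.maxTrivSubmodule K L M)
    (hvanish : ∀ x ∈ ⁅(⊤ : LieIdeal K L), (⊤ : LieIdeal K L)⁆, f x = 0) (x y : L) :
    f ⁅x, y⁆ = ⁅x, f y⁆ - ⁅y, f x⁆ := by
  have hlie (a b : L) : ⁅a, f b⁆ = 0 :=
    (LieModule.mem_maxTrivSubmodule K L M (f b)).1 (htriv b) a
  rw [hvanish _ (lie_mem_derived x y), hlie, hlie, sub_zero]

theorem isCPA_of_central_values_vanishing_on_derived_general
    (mul : L →ₗ[K] L →ₗ[K] L)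
    (hsymm : ∀ x y, mul x y = mul y x)
    (hcentral : ∀ x y, mul x y ∈ LieAlgebra.center K L)
    (hderived : ∀ x y, mul x y ∈ ⁅(⊤ : LieIdeal K L), (⊤ : LieIdeal K L)⁆)
    (hvanish : ∀ x ∈ ⁅(⊤ : LieIdeal K L), (⊤ : LieIdeal K L)⁆, ∀ y, mul x y = 0) :
    IsCPAStructure K mul where
  comm := hsymm
  bracket_mul x y z := by
    have mul_mul (a b c : L) : mul a (mul b c) = 0 := by
      rw [hsymm, hvanish _ (hderived b c)]
    rw [hvanish _ (lie_mem_derived x y), mul_mul, mul_mul, sub_zero]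
  mul_bracket x y z := by
    have vanish_right (a : L) (ha : a ∈ ⁅(⊤ : LieIdeal K L), (⊤ : LieIdeal K L)⁆) :
        mul x a = 0 := by
      rw [hsymm, hvanish a ha]
    calc
      mul x ⁅y, z⁆ = ⁅y, mul x z⁆ - ⁅z, mul x y⁆ :=
        leibniz_of_trivial_values_vanishing_on_derived (hcentral x) vanish_right y z
      _ = ⁅mul x y, z⁆ + ⁅y, mul x z⁆ := by rw [sub_eq_add_neg, lie_skew, add_comm]

end

/-- On a Lie algebra `𝔤` (char. zero) with `Z(𝔤) ⊆ [𝔤,𝔤]`, any symmetric bilinear product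
taking only central values and vanishing whenever one argument lies in `[𝔤,𝔤]` is a
CPA-structure (in particular a central one). -/
theorem isCPA_of_central_values_vanishing_on_derived
    (K : Type*) (L : Type*) [Field K] [CharZero K] [LieRing L] [LieAlgebra K L]
    (hstem : LieAlgebra.center K L ≤ ⁅(⊤ : LieIdeal K L), (⊤ : LieIdeal K L)⁆)
    (mul : L →ₗ[K] L →ₗ[K] L)
    (hsymm : ∀ x y : L, mul x y = mul y x)
    (hcentral : ∀ x y : L, mul x y ∈ LieAlgebra.center K L)
    (hvanish : ∀ x y : L,
      (x ∈ ⁅(⊤ : LieIdeal K L), (⊤ : LieIdeal K L)⁆ ∨ y ∈ ⁅(⊤ : LieIdeal K L), (⊤ : LieIdeal K L)⁆) →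
      mul x y = 0) :
    IsCPAStructure K mul :=
  isCPA_of_central_values_vanishing_on_derived_general mul hsymm hcentral
    (fun x y ↦ hstem (hcentral x y)) (fun x hx y ↦ hvanish x y (.inl hx))
end

section
/- Every CPA-structure on the free-nilpotent Lie algebra F_{2,3} on 2 generators of nilpotency class 3, over a field K of characteristic zero, is central, i.e., satisfies x·y ∈ Z(F_{2,3}) for all x,y. -/
/-- The free-nilpotent Lie algebra \`F_{g,c}\` on \`g\` generators of nilpotency class \`c\`:
the quotient of the free Lie algebra on \`g\` generators by the \`(c+1)\`-st term \`𝔤^{c+1}\` of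
its lower central series (which is \`lowerCentralSeries c\` in Mathlib's indexing). -/
abbrev FreeNilpotentLieAlgebra (K : Type*) [Field K] (g c : ℕ) :=
  FreeLieAlgebra K (Fin g) ⧸
    LieModule.lowerCentralSeries K (FreeLieAlgebra K (Fin g)) (FreeLieAlgebra K (Fin g)) c

/-!
Grade `F_{2,3}` as `V ⊕ K ⊕ V`, where `V = K²` is spanned by the generators, and let `ω` be the
area form on `V`. Each left multiplication of a CPA-structure is a derivation, so it is determined
by its values on `V`; write `x·y = x ⋆ y + β(x, y) + τ(x, y)` for the components in the three
degrees. Then `x` acts on the degree-two line by the trace `θ(x)` of `x ⋆ -`, plus a term `σ(x)` of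
degree three with `ω(σ(x), y) = β(x, y)`.

Comparing degrees in the identity `[a,b]·c = a·(b·c) - b·(a·c)` shows successively that `θ = 0`,
that all triple products `x ⋆ (y ⋆ z)` vanish, that `⋆ = 0`, and that `β = 0`. What is left is `τ`,
whose values are central.
-/

section Transport

variable {K L L' : Type*} [CommRing K] [LieRing L] [LieAlgebra K L] [LieRing L'] [LieAlgebra K L']

theorem IsCPAStructure.congr {mul : L →ₗ[K] L →ₗ[K] L} (h : IsCPAStructure K mul)
    (e : L ≃ₗ⁅K⁆ L') :
    IsCPAStructure K ((mul.compl₁₂ (e.symm : L' →ₗ[K] L) (e.symm : L' →ₗ[K] L)).compr₂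
      (e : L →ₗ[K] L')) where
  comm x y := congrArg e (h.comm _ _)
  bracket_mul x y z := by simp [LieEquiv.map_lie, h.bracket_mul]
  mul_bracket x y z := by simp [LieEquiv.map_lie, h.mul_bracket]

theorem mem_center_of_map_mem_center (e : L ≃ₗ⁅K⁆ L') {x : L}
    (hx : e x ∈ LieAlgebra.center K L') : x ∈ LieAlgebra.center K L := by
  rw [LieModule.mem_maxTrivSubmodule] at hx ⊢
  refine fun y => (map_eq_zero_iff e e.injective).mp ?_
  rw [LieEquiv.map_lie, hx]

end Transport

section Nilpotent

variable {R L : Type*} [CommRing R] [LieRing L] [LieAlgebra R L]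

theorem lowerCentralSeries_three_eq_bot_iff :
    LieModule.lowerCentralSeries R L L 3 = ⊥ ↔ ∀ x y z w : L, ⁅x, ⁅y, ⁅z, w⁆⁆⁆ = 0 := by
  rw [← le_bot_iff, ← LieSubmodule.ucs_eq_top_iff, ← top_le_iff]
  simp only [LieSubmodule.ucs_succ, LieSubmodule.ucs_zero, SetLike.le_def, LieSubmodule.mem_top,
    LieSubmodule.mem_normalizer, LieSubmodule.mem_bot, forall_const]
  exact ⟨fun h x y z w => h z y x, fun h w z y x => h x y z w⟩

end Nilpotent

namespace FreeNilpotentLieAlgebra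

section UniversalProperty

variable (K : Type*) [Field K] {g c : ℕ}

/-- The quotient map from the free Lie algebra. -/
noncomputable def mk : FreeLieAlgebra K (Fin g) →ₗ⁅K⁆ FreeNilpotentLieAlgebra K g c where
  toLinearMap := (LieModule.lowerCentralSeries K (FreeLieAlgebra K (Fin g))
    (FreeLieAlgebra K (Fin g)) c).toSubmodule.mkQ
  map_lie' := rfl

theorem mk_surjective : Function.Surjective (mk K : _ →ₗ⁅K⁆ FreeNilpotentLieAlgebra K g c) :=
  Submodule.mkQ_surjective _

/-- The generators. -/
noncomputable def of (i : Fin g) : FreeNilpotentLieAlgebra K g c := mk K (FreeLieAlgebra.of K i)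

theorem lowerCentralSeries_eq_bot :
    LieModule.lowerCentralSeries K (FreeNilpotentLieAlgebra K g c)
      (FreeNilpotentLieAlgebra K g c) c = ⊥ := by
  rw [← LieIdeal.lowerCentralSeries_map_eq c (mk_surjective K), LieIdeal.map_eq_bot_iff]
  exact fun x hx => LieHom.mem_ker.mpr ((Submodule.Quotient.mk_eq_zero _).mpr hx)

variable {K} {L : Type*} [LieRing L] [LieAlgebra K L]

theorem lowerCentralSeries_le_ker (hL : LieModule.lowerCentralSeries K L L c = ⊥)
    (f : FreeLieAlgebra K (Fin g) →ₗ⁅K⁆ L) :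
    LieModule.lowerCentralSeries K (FreeLieAlgebra K (Fin g)) (FreeLieAlgebra K (Fin g)) c
      ≤ f.ker := by
  rw [← LieIdeal.map_eq_bot_iff, ← le_bot_iff, ← hL]
  exact LieIdeal.map_lowerCentralSeries_le c

/-- The universal property of the free-nilpotent Lie algebra: a family of elements of a Lie algebra
of class at most `c` extends to a homomorphism. -/
noncomputable def lift (hL : LieModule.lowerCentralSeries K L L c = ⊥) (f : Fin g → L) :
    FreeNilpotentLieAlgebra K g c →ₗ⁅K⁆ L where
  toLinearMap := Submodule.liftQ _ (FreeLieAlgebra.lift K f : FreeLieAlgebra K (Fin g) →ₗ[K] L)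
    (lowerCentralSeries_le_ker hL _)
  map_lie' {x y} := by
    obtain ⟨x, rfl⟩ := mk_surjective K x
    obtain ⟨y, rfl⟩ := mk_surjective K y
    exact LieHom.map_lie (FreeLieAlgebra.lift K f) x y

@[simp]
theorem lift_of (hL : LieModule.lowerCentralSeries K L L c = ⊥) (f : Fin g → L) (i : Fin g) :
    lift hL f (of K i) = f i :=
  FreeLieAlgebra.lift_of_apply f i

theorem hom_ext {f f' : FreeNilpotentLieAlgebra K g c →ₗ⁅K⁆ L}
    (h : ∀ i, f (of K i) = f' (of K i)) : f = f' := by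
  have hcomp : f.comp (mk K) = f'.comp (mk K) := FreeLieAlgebra.hom_ext h
  ext x
  obtain ⟨x, rfl⟩ := mk_surjective K x
  exact LieHom.congr_fun hcomp x

end UniversalProperty

end FreeNilpotentLieAlgebra

theorem bilin_eq_zero_of_comm {R M N : Type*} [CommRing R] [AddCommGroup M] [AddCommGroup N]
    [Module R M] [Module R N] {B : M →ₗ[R] M →ₗ[R] N} (h2 : IsSMulRegular N (2 : R))
    (hcomm : ∀ x y, B x y = B y x) (hself : ∀ x, B x x = 0) (x y : M) : B x y = 0 := by
  apply h2
  simpa [hself, hcomm y x, two_smul] using hself (x + y)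

section Area

variable {K : Type*} [CommRing K]

/-- The standard area form on the plane, that is, the determinant of two vectors. -/
def area : K × K →ₗ[K] K × K →ₗ[K] K :=
  LinearMap.mk₂ K (fun x y => x.1 * y.2 - x.2 * y.1)
    (fun _ _ _ => by simp only [Prod.fst_add, Prod.snd_add]; ring)
    (fun _ _ _ => by simp only [Prod.smul_fst, Prod.smul_snd, smul_eq_mul]; ring)
    (fun _ _ _ => by simp only [Prod.fst_add, Prod.snd_add]; ring)
    (fun _ _ _ => by simp only [Prod.smul_fst, Prod.smul_snd, smul_eq_mul]; ring)

theorem area_apply (x y : K × K) : area x y = x.1 * y.2 - x.2 * y.1 := rfl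

theorem area_self (x : K × K) : area x x = 0 := by
  rw [area_apply]; ring

theorem neg_area (x y : K × K) : -area x y = area y x := by
  simp only [area_apply]; ring

theorem area_one_zero_zero_one : area (1, 0) (0, 1) = (1 : K) := by
  simp [area_apply]

theorem area_smul_cyclic (x y z : K × K) :
    area x y • z + area y z • x + area z x • y = 0 := by
  ext <;> simp [area_apply] <;> ring

theorem eq_zero_of_area_eq_zero {x : K × K} (h : ∀ y, area x y = 0) : x = 0 := by
  have hfst := h (0, 1)
  have hsnd := h (1, 0)
  simp only [area_apply, mul_one, mul_zero, sub_zero, zero_sub, neg_eq_zero] at hfst hsnd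
  exact Prod.ext hfst hsnd

theorem area_eq_of_area_smul_eq {v : K × K} {φ : K × K →ₗ[K] K}
    (h : ∀ y z, area y z • v = φ z • y - φ y • z) (y : K × K) : area v y = φ y := by
  have hv : v = φ (0, 1) • (1, 0) - φ (1, 0) • (0, 1) := by
    rw [← h, area_one_zero_zero_one, one_smul]
  have hy : y = y.1 • (1, 0) + y.2 • (0, 1) := by ext <;> simp
  conv_rhs => rw [hy, map_add, map_smul, map_smul]
  simp [hv, area_apply, mul_comm, add_comm]

end Area

/-- The graded model `K² ⊕ K ⊕ K²` of the free-nilpotent Lie algebra on two generators of class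
three. It is a synonym, because the product of the summands carries a different Lie bracket. -/
def F23Model (K : Type*) := (K × K) × K × (K × K)

namespace F23Model

variable {K : Type*} [CommRing K]

instance : AddCommGroup (F23Model K) := inferInstanceAs (AddCommGroup ((K × K) × K × (K × K)))

instance : Module K (F23Model K) := inferInstanceAs (Module K ((K × K) × K × (K × K)))

/-- The component of degree one. -/
def deg₁ : F23Model K →ₗ[K] K × K := LinearMap.fst K (K × K) (K × (K × K))

/-- The component of degree two. -/
def deg₂ : F23Model K →ₗ[K] K := LinearMap.fst K K (K × K) ∘ₗ LinearMap.snd K (K × K) (K × (K × K))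

/-- The component of degree three. -/
def deg₃ : F23Model K →ₗ[K] K × K :=
  LinearMap.snd K K (K × K) ∘ₗ LinearMap.snd K (K × K) (K × (K × K))

/-- The inclusion of the plane spanned by the two generators. -/
def gen : K × K →ₗ[K] F23Model K := LinearMap.inl K (K × K) (K × (K × K))

/-- The bracket of the two generators. -/
def mid : F23Model K := ((0, 0), 1, (0, 0))

/-- The inclusion of the summand of degree three, identified with the plane of generators through
`v ↦ ⁅gen v, mid⁆`. -/
def top : K × K →ₗ[K] F23Model K :=
  LinearMap.inr K (K × K) (K × (K × K)) ∘ₗ LinearMap.inr K K (K × K)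

@[simp] theorem deg₁_gen (v : K × K) : deg₁ (gen v) = v := rfl
@[simp] theorem deg₂_gen (v : K × K) : deg₂ (gen v) = 0 := rfl
@[simp] theorem deg₃_gen (v : K × K) : deg₃ (gen v) = 0 := rfl
@[simp] theorem deg₁_mid : deg₁ (mid : F23Model K) = 0 := rfl
@[simp] theorem deg₂_mid : deg₂ (mid : F23Model K) = 1 := rfl
@[simp] theorem deg₃_mid : deg₃ (mid : F23Model K) = 0 := rfl
@[simp] theorem deg₁_top (v : K × K) : deg₁ (top v) = 0 := rfl
@[simp] theorem deg₂_top (v : K × K) : deg₂ (top v) = 0 := rfl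
@[simp] theorem deg₃_top (v : K × K) : deg₃ (top v) = v := rfl

@[ext]
theorem ext {a b : F23Model K} (h₁ : deg₁ a = deg₁ b) (h₂ : deg₂ a = deg₂ b)
    (h₃ : deg₃ a = deg₃ b) : a = b :=
  Prod.ext h₁ (Prod.ext h₂ h₃)

theorem eq_gen_add_mid_add_top (a : F23Model K) :
    a = gen (deg₁ a) + deg₂ a • mid + top (deg₃ a) := by
  ext <;> simp

instance : Bracket (F23Model K) (F23Model K) where
  bracket a b :=
    area (deg₁ a) (deg₁ b) • mid + top (deg₂ b • deg₁ a - deg₂ a • deg₁ b)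

theorem lie_def (a b : F23Model K) :
    ⁅a, b⁆ = area (deg₁ a) (deg₁ b) • mid + top (deg₂ b • deg₁ a - deg₂ a • deg₁ b) := rfl

@[simp] theorem deg₁_lie (a b : F23Model K) : deg₁ ⁅a, b⁆ = 0 := by simp [lie_def]

@[simp] theorem deg₂_lie (a b : F23Model K) : deg₂ ⁅a, b⁆ = area (deg₁ a) (deg₁ b) := by
  simp [lie_def]

@[simp] theorem deg₃_lie (a b : F23Model K) :
    deg₃ ⁅a, b⁆ = deg₂ b • deg₁ a - deg₂ a • deg₁ b := by
  simp [lie_def]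

instance : LieRing (F23Model K) where
  add_lie a b c := by
    apply ext
    · simp
    · simp
    · simp only [deg₃_lie, map_add]; module
  lie_add a b c := by
    apply ext
    · simp
    · simp
    · simp only [deg₃_lie, map_add]; module
  lie_self a := by apply ext <;> simp [area_self]
  leibniz_lie a b c := by
    apply ext
    · simp
    · simp
    · simp only [deg₃_lie, deg₂_lie, deg₁_lie, map_add, smul_zero, sub_zero, zero_sub]
      rw [← neg_area (deg₁ c) (deg₁ a)]
      linear_combination (norm := module) area_smul_cyclic (deg₁ a) (deg₁ b) (deg₁ c)

instance : LieAlgebra K (F23Model K) where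
  lie_smul r a b := by
    apply ext
    · simp
    · simp
    · simp only [deg₃_lie, map_smul, smul_eq_mul]; module

theorem gen_lie_gen (x y : K × K) : ⁅(gen x : F23Model K), gen y⁆ = area x y • mid := by
  ext <;> simp

theorem gen_lie_mid (x : K × K) : ⁅(gen x : F23Model K), mid⁆ = top x := by
  ext <;> simp

theorem gen_lie_gen_eq_mid : ⁅gen ((1 : K), (0 : K)), gen ((0 : K), (1 : K))⁆ = mid := by
  rw [gen_lie_gen, area_one_zero_zero_one, one_smul]

theorem top_mem_center (v : K × K) : top v ∈ LieAlgebra.center K (F23Model K) := by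
  rw [LieModule.mem_maxTrivSubmodule]
  intro a
  ext <;> simp

section UniversalProperty

variable {L : Type*} [LieRing L] [LieAlgebra K L]

theorem lowerCentralSeries_eq_bot :
    LieModule.lowerCentralSeries K (F23Model K) (F23Model K) 3 = ⊥ := by
  rw [lowerCentralSeries_three_eq_bot_iff]
  intro a b c d
  ext <;> simp

/-- A pair of elements of a Lie algebra of class at most three extends to a homomorphism from the
model. -/
def lift (hL : LieModule.lowerCentralSeries K L L 3 = ⊥) (x y : L) : F23Model K →ₗ⁅K⁆ L where
  toFun a := (deg₁ a).1 • x + (deg₁ a).2 • y + deg₂ a • ⁅x, y⁆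
    + (deg₃ a).1 • ⁅x, ⁅x, y⁆⁆ + (deg₃ a).2 • ⁅y, ⁅x, y⁆⁆
  map_add' a b := by
    simp only [map_add, Prod.fst_add, Prod.snd_add]
    module
  map_smul' r a := by
    simp only [map_smul, Prod.smul_fst, Prod.smul_snd, smul_eq_mul, RingHom.id_apply]
    module
  map_lie' {a b} := by
    have hnil := lowerCentralSeries_three_eq_bot_iff.mp hL
    have hnil₁ (p q r s : L) : ⁅⁅p, ⁅q, r⁆⁆, s⁆ = 0 := by rw [← lie_skew, hnil, neg_zero]
    simp only [deg₁_lie, deg₂_lie, deg₃_lie, area_apply, Prod.fst_zero, Prod.snd_zero,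
      Prod.fst_sub, Prod.snd_sub, Prod.smul_fst, Prod.smul_snd, smul_eq_mul, lie_add, add_lie,
      lie_smul, smul_lie, lie_self, hnil, hnil₁, ← lie_skew y x, ← lie_skew ⁅x, y⁆ x,
      ← lie_skew ⁅x, y⁆ y]
    module

theorem lift_apply (hL : LieModule.lowerCentralSeries K L L 3 = ⊥) (x y : L) (a : F23Model K) :
    lift hL x y a = (deg₁ a).1 • x + (deg₁ a).2 • y + deg₂ a • ⁅x, y⁆
      + (deg₃ a).1 • ⁅x, ⁅x, y⁆⁆ + (deg₃ a).2 • ⁅y, ⁅x, y⁆⁆ :=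
  rfl

end UniversalProperty

end F23Model

namespace FreeNilpotentLieAlgebra

section GradedModel

variable (K : Type*) [Field K]

/-- The homomorphism from `F_{2,3}` to its graded model that matches the generators. -/
noncomputable def toF23Model : FreeNilpotentLieAlgebra K 2 3 →ₗ⁅K⁆ F23Model K :=
  lift F23Model.lowerCentralSeries_eq_bot ![F23Model.gen (1, 0), F23Model.gen (0, 1)]

/-- The homomorphism from the graded model to `F_{2,3}` that matches the generators. -/
noncomputable def ofF23Model : F23Model K →ₗ⁅K⁆ FreeNilpotentLieAlgebra K 2 3 :=
  F23Model.lift (lowerCentralSeries_eq_bot K) (of K 0) (of K 1)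

theorem ofF23Model_comp_toF23Model : (ofF23Model K).comp (toF23Model K) = LieHom.id := by
  refine hom_ext fun i => ?_
  fin_cases i <;> simp [toF23Model, ofF23Model, F23Model.lift_apply]

theorem toF23Model_ofF23Model (a : F23Model K) : toF23Model K (ofF23Model K a) = a := by
  ext <;> simp [toF23Model, ofF23Model, F23Model.lift_apply, area_apply]

/-- The identification of `F_{2,3}` with its graded model. -/
noncomputable def equivF23Model : FreeNilpotentLieAlgebra K 2 3 ≃ₗ⁅K⁆ F23Model K where
  __ := toF23Model K
  invFun := ofF23Model K
  left_inv := LieHom.congr_fun (ofF23Model_comp_toF23Model K)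
  right_inv := toF23Model_ofF23Model K

end GradedModel

end FreeNilpotentLieAlgebra

namespace F23Model

variable {K : Type*} [CommRing K] (mul : F23Model K →ₗ[K] F23Model K →ₗ[K] F23Model K)

/-- The degree-one component of the product of two generators (`⋆` in the formulas below). -/
def genMul₁ : K × K →ₗ[K] K × K →ₗ[K] K × K := (mul.compl₁₂ gen gen).compr₂ deg₁

/-- The degree-two component of the product of two generators (`β` in the formulas below). -/
def genMul₂ : K × K →ₗ[K] K × K →ₗ[K] K := (mul.compl₁₂ gen gen).compr₂ deg₂

/-- The degree-three component of the product of two generators (`τ` in the formulas below). -/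
def genMul₃ : K × K →ₗ[K] K × K →ₗ[K] K × K := (mul.compl₁₂ gen gen).compr₂ deg₃

/-- The degree-two component of the product of a generator with `mid` (`θ` in the formulas
below). -/
def midMul₂ : K × K →ₗ[K] K := deg₂ ∘ₗ mul.flip mid ∘ₗ gen

/-- The degree-three component of the product of a generator with `mid` (`σ` in the formulas
below). -/
def midMul₃ : K × K →ₗ[K] K × K := deg₃ ∘ₗ mul.flip mid ∘ₗ gen

/-- The degree-three component of the square of `mid` (`υ` in the formulas below). -/
def midSq : K × K := deg₃ (mul mid mid)

end F23Model

namespace IsCPAStructure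

open F23Model

variable {K : Type*} [CommRing K] {mul : F23Model K →ₗ[K] F23Model K →ₗ[K] F23Model K}

local notation "ω" => area
local infixl:75 "⋆" => genMul₁ mul
local notation "β" => genMul₂ mul
local notation "τ" => genMul₃ mul
local notation "θ" => midMul₂ mul
local notation "σ" => midMul₃ mul
local notation "υ" => midSq mul

theorem mul_gen_gen (x y : K × K) :
    mul (gen x) (gen y) = gen (x ⋆ y) + β x y • mid + top (τ x y) :=
  eq_gen_add_mid_add_top _

theorem genMul₁_comm (h : IsCPAStructure K mul) (x y : K × K) : x ⋆ y = y ⋆ x :=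
  congrArg deg₁ (h.comm _ _)

theorem genMul₂_comm (h : IsCPAStructure K mul) (x y : K × K) : β x y = β y x :=
  congrArg deg₂ (h.comm _ _)

theorem deg₁_mul_mid (h : IsCPAStructure K mul) (a : F23Model K) : deg₁ (mul a mid) = 0 := by
  rw [← gen_lie_gen_eq_mid, h.mul_bracket, map_add, deg₁_lie, deg₁_lie, add_zero]

theorem mul_gen_mid (h : IsCPAStructure K mul) (x : K × K) :
    mul (gen x) mid = θ x • mid + top (σ x) := by
  ext1
  · simp [h.deg₁_mul_mid]
  · simp [midMul₂]
  · simp [midMul₃]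

theorem deg₂_mul_mid_mid (h : IsCPAStructure K mul) : deg₂ (mul mid mid) = 0 := by
  have key := congrArg deg₂ (h.mul_bracket mid (gen (1, 0)) (gen (0, 1)))
  simpa [gen_lie_gen_eq_mid, h.comm mid (gen _), h.deg₁_mul_mid] using key

theorem mul_mid_mid (h : IsCPAStructure K mul) : mul mid mid = top υ := by
  ext1
  · simp [h.deg₁_mul_mid]
  · simp [h.deg₂_mul_mid_mid]
  · rfl

theorem mul_gen_top (h : IsCPAStructure K mul) (x v : K × K) :
    mul (gen x) (top v) = top (x ⋆ v + θ x • v) := by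
  rw [← gen_lie_mid v, h.mul_bracket, mul_gen_gen, h.mul_gen_mid]
  ext1 <;> simp

theorem mul_mid_top (h : IsCPAStructure K mul) (v : K × K) : mul mid (top v) = 0 := by
  rw [← gen_lie_mid v, h.mul_bracket, h.comm mid, h.mul_gen_mid, h.mul_mid_mid]
  ext1 <;> simp

theorem mul_top_top (h : IsCPAStructure K mul) (v w : K × K) : mul (top v) (top w) = 0 := by
  rw [← gen_lie_mid w, h.mul_bracket, h.comm _ (gen w), h.comm _ mid, h.mul_gen_top, h.mul_mid_top]
  ext1 <;> simp

theorem midMul₂_mul_area (h : IsCPAStructure K mul) (x y z : K × K) :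
    θ x * ω y z = ω (x ⋆ y) z + ω y (x ⋆ z) := by
  have key := congrArg deg₂ (h.mul_bracket (gen x) (gen y) (gen z))
  simpa [gen_lie_gen, h.mul_gen_mid, mul_gen_gen, mul_comm] using key

theorem area_smul_midMul₃ (h : IsCPAStructure K mul) (x y z : K × K) :
    ω y z • σ x = β x z • y - β x y • z := by
  have key := congrArg deg₃ (h.mul_bracket (gen x) (gen y) (gen z))
  simpa [gen_lie_gen, h.mul_gen_mid, mul_gen_gen, neg_add_eq_sub] using key

theorem area_smul_midSq (h : IsCPAStructure K mul) (y z : K × K) :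
    ω y z • υ = θ z • y - θ y • z := by
  have key := congrArg deg₃ (h.mul_bracket mid (gen y) (gen z))
  simpa [gen_lie_gen, h.comm mid (gen _), h.mul_gen_mid, h.mul_mid_mid, neg_add_eq_sub] using key

theorem area_midMul₃ (h : IsCPAStructure K mul) (x y : K × K) : ω (σ x) y = β x y :=
  area_eq_of_area_smul_eq (h.area_smul_midMul₃ x) y

theorem area_midSq (h : IsCPAStructure K mul) (y : K × K) : ω υ y = θ y :=
  area_eq_of_area_smul_eq h.area_smul_midSq y

theorem genMul₁_left_comm (h : IsCPAStructure K mul) (x y z : K × K) :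
    x ⋆ (y ⋆ z) = y ⋆ (x ⋆ z) := by
  have key := congrArg deg₁ (h.bracket_mul (gen x) (gen y) (gen z))
  refine sub_eq_zero.mp ?_
  simpa [gen_lie_gen, h.comm mid, mul_gen_gen, h.mul_gen_mid, h.mul_gen_top] using key.symm

theorem area_mul_midMul₂ (h : IsCPAStructure K mul) (x y z : K × K) :
    ω x y * θ z = β x (y ⋆ z) + β y z * θ x - (β y (x ⋆ z) + β x z * θ y) := by
  have key := congrArg deg₂ (h.bracket_mul (gen x) (gen y) (gen z))
  simpa [gen_lie_gen, h.comm mid, mul_gen_gen, h.mul_gen_mid, h.mul_gen_top] using key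

theorem area_smul_midMul₃_eq (h : IsCPAStructure K mul) (x y z : K × K) :
    ω x y • σ z = τ x (y ⋆ z) + β y z • σ x + (x ⋆ τ y z + θ x • τ y z)
      - (τ y (x ⋆ z) + β x z • σ y + (y ⋆ τ x z + θ y • τ x z)) := by
  have key := congrArg deg₃ (h.bracket_mul (gen x) (gen y) (gen z))
  simpa [gen_lie_gen, h.comm mid, mul_gen_gen, h.mul_gen_mid, h.mul_gen_top] using key

theorem midMul₂_genMul₁ (h : IsCPAStructure K mul) (x z : K × K) : θ (x ⋆ z) = θ z * θ x := by
  have key := congrArg deg₂ (h.bracket_mul (gen x) mid (gen z))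
  refine (sub_eq_zero.mp ?_).symm
  simpa [gen_lie_mid, h.comm mid (gen _), h.comm (top _) (gen _), mul_gen_gen, h.mul_gen_mid,
    h.mul_gen_top, h.mul_mid_mid, h.mul_mid_top] using key.symm

theorem genMul₁_add_smul (h : IsCPAStructure K mul) (x z : K × K) :
    z ⋆ x + θ z • x = θ z • σ x + (x ⋆ σ z + θ x • σ z) - (σ (x ⋆ z) + β x z • υ) := by
  have key := congrArg deg₃ (h.bracket_mul (gen x) mid (gen z))
  simpa [gen_lie_mid, h.comm mid (gen _), h.comm (top _) (gen _), mul_gen_gen, h.mul_gen_mid,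
    h.mul_gen_top, h.mul_mid_mid, h.mul_mid_top] using key

theorem genMul₁_midSq (h : IsCPAStructure K mul) (x : K × K) : x ⋆ υ = 0 := by
  have key := congrArg deg₃ (h.bracket_mul (gen x) mid mid)
  simpa [gen_lie_mid, h.comm (top _) mid, h.mul_gen_mid, h.mul_gen_top, h.mul_mid_mid,
    h.mul_mid_top] using key.symm

section Vanishing

variable [IsReduced K]

theorem midMul₂_eq_zero (h : IsCPAStructure K mul) (x : K × K) : θ x = 0 := by
  have hθυ : θ υ = 0 := by rw [← h.area_midSq, area_self]
  have hυ (z : K × K) : β υ (x ⋆ z) = θ x * θ z + θ x * β υ z := by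
    have key := h.area_mul_midMul₂ x υ z
    rw [← neg_area υ x, h.area_midSq, h.genMul₁_comm υ z, h.genMul₁_midSq, hθυ, map_zero] at key
    linear_combination key
  have hυυ : θ x * β υ υ = 0 := by
    have key := hυ υ
    rwa [h.genMul₁_midSq, hθυ, map_zero, mul_zero, zero_add, eq_comm] at key
  -- `p` is annihilated by `θ = ω υ`, so `θ x • p` is a multiple of `υ`.
  let p := x ⋆ x - θ x • x
  have hp : θ x • p = -ω x p • υ := by
    have key := area_smul_cyclic υ x p
    have hpυ : ω p υ = 0 := by
      rw [← neg_area, h.area_midSq, map_sub, h.midMul₂_genMul₁, map_smul, smul_eq_mul, sub_self,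
        neg_zero]
    rw [hpυ, h.area_midSq, zero_smul, add_zero] at key
    rw [neg_smul]
    exact eq_neg_of_add_eq_zero_left key
  have hβp : β υ p = θ x ^ 2 := by
    rw [map_sub, hυ, map_smul, smul_eq_mul]; ring
  have hcube : θ x * θ x ^ 2 = -ω x p * β υ υ := by
    rw [← hβp, ← smul_eq_mul, ← map_smul, hp, map_smul, smul_eq_mul]
  refine pow_eq_zero_iff (n := 4) four_ne_zero |>.mp ?_
  linear_combination θ x * hcube - ω x p * hυυ

theorem midSq_eq_zero (h : IsCPAStructure K mul) : υ = 0 :=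
  eq_zero_of_area_eq_zero fun y => (h.area_midSq y).trans (h.midMul₂_eq_zero y)

theorem genMul₂_left_comm (h : IsCPAStructure K mul) (x y z : K × K) :
    β x (y ⋆ z) = β y (x ⋆ z) := by
  have key := h.area_mul_midMul₂ x y z
  simp only [h.midMul₂_eq_zero, mul_zero, add_zero] at key
  exact sub_eq_zero.mp key.symm

theorem area_genMul₁_swap (h : IsCPAStructure K mul) (x y z : K × K) :
    ω (x ⋆ y) z = -ω y (x ⋆ z) := by
  have key := h.midMul₂_mul_area x y z
  rw [h.midMul₂_eq_zero, zero_mul] at key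
  exact eq_neg_of_add_eq_zero_left key.symm

theorem genMul₁_eq (h : IsCPAStructure K mul) (x z : K × K) :
    x ⋆ z = x ⋆ σ z - σ (x ⋆ z) := by
  simpa [h.midMul₂_eq_zero, h.midSq_eq_zero, h.genMul₁_comm z x] using h.genMul₁_add_smul x z

theorem area_genMul₁ (h : IsCPAStructure K mul) (x y z : K × K) :
    ω (x ⋆ y) z = -2 * β x (y ⋆ z) := by
  calc ω (x ⋆ y) z = ω (x ⋆ σ y) z - ω (σ (x ⋆ y)) z := by
        conv_lhs => rw [h.genMul₁_eq, map_sub, LinearMap.sub_apply]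
    _ = -β y (x ⋆ z) - β z (x ⋆ y) := by
        rw [h.area_genMul₁_swap, h.area_midMul₃, h.area_midMul₃, h.genMul₂_comm (x ⋆ y)]
    _ = -2 * β x (y ⋆ z) := by
        rw [h.genMul₂_left_comm y, h.genMul₂_left_comm z, h.genMul₁_comm z]; ring

theorem two_smul_midMul₃_genMul₁ (h : IsCPAStructure K mul) (x y : K × K) :
    (2 : K) • σ (x ⋆ y) = -(x ⋆ y) := by
  refine eq_neg_of_add_eq_zero_left (eq_zero_of_area_eq_zero fun z => ?_)
  rw [map_add, map_smul, LinearMap.add_apply, LinearMap.smul_apply, h.area_midMul₃,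
    h.area_genMul₁, h.genMul₂_comm, h.genMul₂_left_comm, h.genMul₁_comm z, smul_eq_mul]
  ring

theorem area_genMul₁_genMul₁ (h : IsCPAStructure K mul) (h2 : IsLeftRegular (2 : K))
    (x y z w : K × K) : ω (x ⋆ y) (z ⋆ w) = 0 := by
  have hsymm : ω (x ⋆ y) (z ⋆ w) = ω (z ⋆ w) (x ⋆ y) := by
    rw [h.area_genMul₁, h.area_genMul₁, h.genMul₁_left_comm w x y, h.genMul₂_left_comm z x,
      h.genMul₁_comm w y, h.genMul₁_left_comm z y w]
  rw [← h2.mul_left_eq_zero_iff]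
  linear_combination hsymm - neg_area (x ⋆ y) (z ⋆ w)

theorem genMul₁_genMul₁_eq_zero (h : IsCPAStructure K mul) (h2 : IsLeftRegular (2 : K))
    (x y z : K × K) : x ⋆ (y ⋆ z) = 0 :=
  eq_zero_of_area_eq_zero fun w => by
    rw [h.area_genMul₁_swap, h.area_genMul₁_genMul₁ h2, neg_zero]

theorem area_genMul₁_self_smul (h : IsCPAStructure K mul) (h2 : IsLeftRegular (2 : K))
    (x : K × K) : ω x (x ⋆ x) • (x ⋆ x) = 0 := by
  set n := x ⋆ x with hn
  have htriple := h.genMul₁_genMul₁_eq_zero h2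
  have hmul_n (y : K × K) : y ⋆ n = 0 := htriple y x x
  have hn_mul (y : K × K) : n ⋆ y = 0 := (h.genMul₁_comm n y).trans (hmul_n y)
  have hσn : (2 : K) • σ n = -n := h.two_smul_midMul₃_genMul₁ x x
  have hσx : n = x ⋆ σ x - σ n := h.genMul₁_eq x x
  have hxσn : x ⋆ σ n = 0 := by
    have key := h.genMul₁_eq x n
    rwa [hmul_n, map_zero, sub_zero, eq_comm] at key
  have hβnn : β n n = 0 := by
    rw [hn, h.genMul₂_left_comm, ← hn, hn_mul, map_zero]
  have hβnx : 2 * β n x = ω x n := by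
    rw [← h.area_midMul₃, ← smul_eq_mul, ← LinearMap.smul_apply, ← map_smul, hσn, map_neg,
      LinearMap.neg_apply, neg_area]
  -- Two values of `x ⋆ τ n n`: from degree three of `[x,n]·n`, and from `x ⋆ -` applied to degree
  -- three of `[x,n]·x`.
  have hxnn : x ⋆ τ n n = (ω x n + β n x) • σ n := by
    have key := h.area_smul_midMul₃_eq x n n
    simp only [h.midMul₂_eq_zero, hmul_n, hn_mul, hβnn, map_zero, zero_smul, add_zero, zero_add,
      h.genMul₂_comm x n] at key
    rw [add_smul, key, sub_add_cancel]
  have hxnx : x ⋆ τ n n = (β n x - ω x n) • (x ⋆ σ x) := by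
    have key := congrArg (genMul₁ mul x) (h.area_smul_midMul₃_eq x n x)
    simp only [h.midMul₂_eq_zero, hn_mul, htriple, hxσn, map_add, map_sub, map_smul, map_zero,
      zero_smul, smul_zero, add_zero, zero_add] at key
    rw [sub_smul, key, sub_sub_cancel]
  rw [← hβnx] at hxnn hxnx ⊢
  linear_combination (norm := module)
    (-2 * β n x) • hσx + (2 : K) • hxnn - (2 : K) • hxnx + (4 * β n x) • hσn

theorem genMul₁_self_eq_zero (h : IsCPAStructure K mul) (h2 : IsLeftRegular (2 : K))
    (x : K × K) : x ⋆ x = 0 := by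
  have hsmul := h.area_genMul₁_self_smul h2 x
  have hxx : x ⋆ (x ⋆ x) = 0 := h.genMul₁_genMul₁_eq_zero h2 x x x
  have harea : ω x (x ⋆ x) = 0 := by
    refine pow_eq_zero_iff two_ne_zero |>.mp ?_
    rw [sq, ← smul_eq_mul, ← map_smul, hsmul, map_zero]
  have hsmul' (z : K × K) : ω (x ⋆ x) z • (x ⋆ x) = 0 := by
    have key := congrArg (genMul₁ mul x) (area_smul_cyclic x (x ⋆ x) z)
    simpa [harea, hxx] using key
  refine eq_zero_of_area_eq_zero fun z => pow_eq_zero_iff two_ne_zero |>.mp ?_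
  rw [sq, ← smul_eq_mul, ← LinearMap.smul_apply, ← map_smul, hsmul', map_zero,
    LinearMap.zero_apply]

theorem genMul₁_eq_zero (h : IsCPAStructure K mul) (h2 : IsLeftRegular (2 : K))
    (x y : K × K) : x ⋆ y = 0 :=
  bilin_eq_zero_of_comm (Prod.isSMulRegular_iff.mpr ⟨h2.isSMulRegular, h2.isSMulRegular⟩)
    h.genMul₁_comm (h.genMul₁_self_eq_zero h2) x y

theorem genMul₂_self_eq_zero (h : IsCPAStructure K mul) (h2 : IsLeftRegular (2 : K))
    (z : K × K) : β z z = 0 := by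
  have hσz : σ z = β (0, 1) z • σ (1, 0) - β (1, 0) z • σ (0, 1) := by
    simpa [h.genMul₁_eq_zero h2, h.midMul₂_eq_zero, area_one_zero_zero_one] using
      h.area_smul_midMul₃_eq (1, 0) (0, 1) z
  rw [← h.area_midMul₃, hσz, map_sub, map_smul, map_smul, LinearMap.sub_apply,
    LinearMap.smul_apply, LinearMap.smul_apply, h.area_midMul₃, h.area_midMul₃, smul_eq_mul,
    smul_eq_mul, mul_comm, sub_self]

theorem genMul₂_eq_zero (h : IsCPAStructure K mul) (h2 : IsLeftRegular (2 : K))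
    (x y : K × K) : β x y = 0 :=
  bilin_eq_zero_of_comm h2.isSMulRegular h.genMul₂_comm (h.genMul₂_self_eq_zero h2) x y

theorem midMul₃_eq_zero (h : IsCPAStructure K mul) (h2 : IsLeftRegular (2 : K))
    (x : K × K) : σ x = 0 :=
  eq_zero_of_area_eq_zero fun y => (h.area_midMul₃ x y).trans (h.genMul₂_eq_zero h2 x y)

theorem mul_eq_top (h : IsCPAStructure K mul) (h2 : IsLeftRegular (2 : K)) (a b : F23Model K) :
    mul a b = top (τ (deg₁ a) (deg₁ b)) := by
  conv_lhs => rw [eq_gen_add_mid_add_top a, eq_gen_add_mid_add_top b]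
  simp [mul_gen_gen, h.mul_gen_mid, h.mul_gen_top, h.mul_mid_mid, h.mul_mid_top, h.mul_top_top,
    h.comm mid (gen _), h.comm (top _) (gen _), h.comm (top _) mid, h.genMul₁_eq_zero h2,
    h.genMul₂_eq_zero h2, h.midMul₂_eq_zero, h.midMul₃_eq_zero h2, h.midSq_eq_zero]

theorem mul_mem_center (h : IsCPAStructure K mul) (h2 : IsLeftRegular (2 : K))
    (a b : F23Model K) : mul a b ∈ LieAlgebra.center K (F23Model K) := by
  rw [h.mul_eq_top h2]
  exact top_mem_center _

end Vanishing

end IsCPAStructure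

theorem cpa_on_F23_is_central_general (K : Type*) [Field K] (h2 : (2 : K) ≠ 0)
    (mul : FreeNilpotentLieAlgebra K 2 3 →ₗ[K]
      FreeNilpotentLieAlgebra K 2 3 →ₗ[K] FreeNilpotentLieAlgebra K 2 3)
    (hcpa : IsCPAStructure K mul) :
    ∀ x y : FreeNilpotentLieAlgebra K 2 3,
      mul x y ∈ LieAlgebra.center K (FreeNilpotentLieAlgebra K 2 3) := by
  intro x y
  let e := FreeNilpotentLieAlgebra.equivF23Model K
  apply mem_center_of_map_mem_center e
  have hmodel := (hcpa.congr e).mul_mem_center (mul_right_injective₀ h2) (e x) (e y)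
  simpa using hmodel

/-- Every CPA-structure on the free-nilpotent Lie algebra `F_{2,3}` over a field of
characteristic zero is central. -/
theorem cpa_on_F23_is_central (K : Type*) [Field K] [CharZero K]
    (mul : FreeNilpotentLieAlgebra K 2 3 →ₗ[K]
      FreeNilpotentLieAlgebra K 2 3 →ₗ[K] FreeNilpotentLieAlgebra K 2 3)
    (hcpa : IsCPAStructure K mul) :
    ∀ x y : FreeNilpotentLieAlgebra K 2 3,
      mul x y ∈ LieAlgebra.center K (FreeNilpotentLieAlgebra K 2 3) :=
  cpa_on_F23_is_central_general K two_ne_zero mul hcpa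
end

section
/- On the free-nilpotent Lie algebra 𝔤 = F_{3,2} on 3 generators of nilpotency class 2, over a field K of characteristic zero, there exists a CPA-structure x·y with 𝔤 · Z(𝔤) ≠ 0, i.e., with x·z ≠ 0 for some x ∈ 𝔤 and z ∈ Z(𝔤). Concretely, on the 6-dimensional Lie algebra with basis (e_1,…,e_6) and brackets [e_1,e_2]=e_4, [e_1,e_3]=e_5, [e_2,e_3]=e_6, the symmetric bilinear product determined by e_1·e_1 = e_2, e_1·e_2 = −e_5, e_1·e_5 = e_6, e_2·e_3 = −2e_6 (all other products of basis elements zero) is such a CPA-structure. -/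
/-!
`F_{3,2}` is `V × V` for `V = K³`, with bracket `⁅(v, w), (v', w')⁆ = (0, v × v')`, because
`Λ²V ≅ V` through the cross product: both algebras are of class two and solve the same universal
problem on three generators. Let `e 0, e 1, e 2` be the standard basis of the first factor and
`f 0 = ⁅e 1, e 2⁆`, `f 1 = ⁅e 2, e 0⁆`, `f 2 = ⁅e 0, e 1⁆` that of the second, which is central.
Put `e 0 · e 0 = e 1` and `e 0 · e 2 = 0`. The derivation `e 0 · _` then sends `f 1 = ⁅e 2, e 0⁆`
to `⁅e 2, e 1⁆ = -f 0 ≠ 0`, and `bracket_mul` at `(e 2, e 0, e 0)` becomes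
`f 1 · e 0 = e 2 · e 1`, so that `e 1 · e 2 = -f 0`. All other products can be taken to be zero.

In terms of `e_1, …, e_6` this product is `e_1·e_1 = e_2`, `e_1·e_5 = e_6`, `e_2·e_3 = -e_6`. The
variant with `e_1·e_2 = -e_5` and `e_2·e_3 = -2 e_6` is not a CPA-structure: the two sides of
`bracket_mul` at `(e_1, e_3, e_1)` are `e_6` and `2 e_6`.
-/

section Quotient

variable {R L L' : Type*} [CommRing R] [LieRing L] [LieAlgebra R L] [LieRing L'] [LieAlgebra R L']

/-- The projection onto the quotient by an ideal as a homomorphism of Lie algebras;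
`LieSubmodule.Quotient.mk'` is only a homomorphism of Lie modules. -/
def lieQuotientMk (I : LieIdeal R L) : L →ₗ⁅R⁆ L ⧸ I where
  toLinearMap := I.toSubmodule.mkQ
  map_lie' := rfl

theorem lieQuotientMk_surjective (I : LieIdeal R L) : Function.Surjective (lieQuotientMk I) :=
  I.toSubmodule.mkQ_surjective

theorem le_ker_lieQuotientMk (I : LieIdeal R L) : I ≤ (lieQuotientMk I).ker := fun _ hx =>
  (lieQuotientMk I).mem_ker.mpr (LieSubmodule.Quotient.mk_eq_zero'.mpr hx)

/-- The homomorphism of Lie algebras induced on a quotient by a homomorphism that kills the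
ideal. -/
def lieQuotientLift (I : LieIdeal R L) (φ : L →ₗ⁅R⁆ L') (hφ : I ≤ φ.ker) : L ⧸ I →ₗ⁅R⁆ L' where
  toLinearMap := I.toSubmodule.liftQ φ fun _ hx => φ.mem_ker.mp (hφ hx)
  map_lie' {x y} := by
    obtain ⟨x, rfl⟩ := lieQuotientMk_surjective I x
    obtain ⟨y, rfl⟩ := lieQuotientMk_surjective I y
    exact φ.map_lie x y

end Quotient

theorem lowerCentralSeries_two_eq_bot_iff {R L : Type*} [CommRing R] [LieRing L]
    [LieAlgebra R L] :
    LieModule.lowerCentralSeries R L L 2 = ⊥ ↔ ∀ x y z : L, ⁅x, ⁅y, z⁆⁆ = 0 := by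
  rw [LieModule.lowerCentralSeries_succ, LieModule.lowerCentralSeries_succ,
    LieModule.lowerCentralSeries_zero, LieSubmodule.lie_eq_bot_iff]
  refine ⟨fun h x y z => h x trivial ⁅y, z⁆ (LieSubmodule.lie_mem_lie trivial trivial),
    fun h x _ m hm => ?_⟩
  have derived_le_center : ⁅(⊤ : LieIdeal R L), (⊤ : LieIdeal R L)⁆ ≤ LieAlgebra.center R L :=
    (LieSubmodule.lie_le_iff _ _ _).mpr fun y _ z _ =>
      (LieModule.mem_maxTrivSubmodule R L L ⁅y, z⁆).mpr fun x => h x y z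
  exact (LieModule.mem_maxTrivSubmodule R L L m).mp (derived_le_center hm) x

/-- The free nilpotent Lie algebra of class `c` on a set `X` of generators over a commutative
ring. `FreeNilpotentLieAlgebra K g c` is the case `X = Fin g` over a field. -/
abbrev FreeNilpotent (R X : Type*) [CommRing R] (c : ℕ) :=
  FreeLieAlgebra R X ⧸
    LieModule.lowerCentralSeries R (FreeLieAlgebra R X) (FreeLieAlgebra R X) c

namespace FreeNilpotent

variable {R X L : Type*} [CommRing R] [LieRing L] [LieAlgebra R L] {c : ℕ}

theorem lowerCentralSeries_eq_bot :
    LieModule.lowerCentralSeries R (FreeNilpotent R X c) (FreeNilpotent R X c) c = ⊥ := by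
  rw [← LieIdeal.lowerCentralSeries_map_eq c (lieQuotientMk_surjective _),
    LieIdeal.map_eq_bot_iff]
  exact le_ker_lieQuotientMk _

/-- The generator of the free nilpotent Lie algebra indexed by `i`. -/
noncomputable def of (i : X) : FreeNilpotent R X c :=
  lieQuotientMk _ (FreeLieAlgebra.of R i)

/-- The universal property: generators may be sent anywhere in a Lie algebra of class at
most `c`. -/
noncomputable def lift (hL : LieModule.lowerCentralSeries R L L c = ⊥) (v : X → L) :
    FreeNilpotent R X c →ₗ⁅R⁆ L :=
  lieQuotientLift _ (FreeLieAlgebra.lift R v) <|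
    LieIdeal.map_eq_bot_iff.mp <| le_bot_iff.mp <| hL ▸ LieIdeal.map_lowerCentralSeries_le c

@[simp]
theorem lift_of (hL : LieModule.lowerCentralSeries R L L c = ⊥) (v : X → L) (i : X) :
    lift hL v (of i) = v i :=
  FreeLieAlgebra.lift_of_apply v i

theorem hom_ext {φ ψ : FreeNilpotent R X c →ₗ⁅R⁆ L} (h : ∀ i, φ (of i) = ψ (of i)) : φ = ψ := by
  have hcomp : φ.comp (lieQuotientMk _) = ψ.comp (lieQuotientMk _) := FreeLieAlgebra.hom_ext h
  ext x
  obtain ⟨x, rfl⟩ := lieQuotientMk_surjective _ x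
  exact LieHom.congr_fun hcomp x

end FreeNilpotent

open scoped Matrix

theorem lie_sum_smul_sum_smul {R L : Type*} [CommRing R] [LieRing L] [LieAlgebra R L]
    (a b : Fin 3 → R) (v : Fin 3 → L) :
    ⁅∑ i, a i • v i, ∑ i, b i • v i⁆ = ∑ i, (a ⨯₃ b) i • ⁅v (i + 1), v (i + 2)⁆ := by
  simp only [Fin.sum_univ_three, lie_add, lie_smul, add_lie, smul_lie, lie_self, smul_zero,
    zero_add, smul_add, add_zero, cross_apply, Matrix.cons_val_zero, Matrix.cons_val_one,
    Matrix.cons_val, Fin.reduceAdd]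
  rw [← lie_skew (v 0) (v 1), ← lie_skew (v 0) (v 2), ← lie_skew (v 1) (v 2)]
  module

/-- The Lie algebra `R³ × R³` with bracket `⁅(v, w), (v', w')⁆ = (0, v × v')`, a model of the free
nilpotent Lie algebra of class two on three generators. It is a type of its own because the
product of modules carries the componentwise bracket. -/
def CrossModel (R : Type*) := (Fin 3 → R) × (Fin 3 → R)

namespace CrossModel

variable {R : Type*} [CommRing R]

instance : AddCommGroup (CrossModel R) :=
  inferInstanceAs (AddCommGroup ((Fin 3 → R) × (Fin 3 → R)))

instance : Module R (CrossModel R) := inferInstanceAs (Module R ((Fin 3 → R) × (Fin 3 → R)))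

/-- The component of degree one. -/
def vec : CrossModel R →ₗ[R] Fin 3 → R := LinearMap.fst R _ _

/-- The component of degree two, which is central. -/
def cen : CrossModel R →ₗ[R] Fin 3 → R := LinearMap.snd R _ _

/-- The inclusion of the component of degree one. -/
def ofVec : (Fin 3 → R) →ₗ[R] CrossModel R := LinearMap.inl R _ _

/-- The inclusion of the component of degree two. -/
def ofCen : (Fin 3 → R) →ₗ[R] CrossModel R := LinearMap.inr R _ _

@[simp] theorem vec_ofVec (v : Fin 3 → R) : vec (ofVec v) = v := rfl

@[simp] theorem cen_ofVec (v : Fin 3 → R) : cen (ofVec v) = 0 := rfl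

@[simp] theorem vec_ofCen (w : Fin 3 → R) : vec (ofCen w) = 0 := rfl

@[simp] theorem cen_ofCen (w : Fin 3 → R) : cen (ofCen w) = w := rfl

theorem ofVec_vec_add_ofCen_cen (x : CrossModel R) : ofVec (vec x) + ofCen (cen x) = x :=
  Prod.fst_add_snd x

instance : Bracket (CrossModel R) (CrossModel R) := ⟨fun x y => ofCen (vec x ⨯₃ vec y)⟩

theorem lie_def (x y : CrossModel R) : ⁅x, y⁆ = ofCen (vec x ⨯₃ vec y) := rfl

@[simp] theorem vec_lie (x y : CrossModel R) : vec ⁅x, y⁆ = 0 := rfl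

theorem lie_lie_eq_zero (x y z : CrossModel R) : ⁅x, ⁅y, z⁆⁆ = 0 := by
  rw [lie_def, vec_lie, map_zero, map_zero]

instance : LieRing (CrossModel R) where
  add_lie x y z := by simp only [lie_def, map_add, LinearMap.add_apply]
  lie_add x y z := by simp only [lie_def, map_add]
  lie_self x := by rw [lie_def, cross_self, map_zero]
  leibniz_lie x y z := by
    rw [lie_lie_eq_zero, lie_lie_eq_zero, lie_def ⁅x, y⁆, vec_lie, map_zero, LinearMap.zero_apply,
      map_zero, add_zero]

instance : LieAlgebra R (CrossModel R) where
  lie_smul a x y := by simp only [lie_def, map_smul]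

/-- The standard basis of the component of degree one. -/
def e (i : Fin 3) : CrossModel R := ofVec (Pi.single i 1)

/-- The standard basis of the component of degree two: `f 0 = ⁅e 1, e 2⁆`,
`f 1 = ⁅e 2, e 0⁆`, `f 2 = ⁅e 0, e 1⁆`. -/
def f (i : Fin 3) : CrossModel R := ofCen (Pi.single i 1)

theorem lie_e_succ (i : Fin 3) :
    ⁅(e (i + 1) : CrossModel R), (e (i + 2) : CrossModel R)⁆ = f i := by
  rw [lie_def, f]
  congr 1
  ext j
  fin_cases i <;> fin_cases j <;> simp [e, cross_apply]

theorem sum_smul_e_add_sum_smul_f (x : CrossModel R) :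
    ∑ i, vec x i • e i + ∑ i, cen x i • f i = x := by
  simp only [e, f, ← map_smul, ← map_sum, ← pi_eq_sum_univ', ofVec_vec_add_ofCen_cen]

theorem hom_ext {L : Type*} [LieRing L] [LieAlgebra R L] {φ ψ : CrossModel R →ₗ⁅R⁆ L}
    (h : ∀ i, φ (e i) = ψ (e i)) : φ = ψ := by
  ext x
  rw [← sum_smul_e_add_sum_smul_f x]
  simp only [map_add, map_sum, map_smul, ← lie_e_succ, LieHom.map_lie, h]

/-- The homomorphism from the model to a Lie algebra of class at most two with prescribed images
of the generators. -/
def lift {L : Type*} [LieRing L] [LieAlgebra R L] (hL : ∀ x y z : L, ⁅x, ⁅y, z⁆⁆ = 0)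
    (v : Fin 3 → L) : CrossModel R →ₗ⁅R⁆ L where
  toLinearMap := Fintype.linearCombination R v ∘ₗ vec +
    Fintype.linearCombination R (fun i => ⁅v (i + 1), v (i + 2)⁆) ∘ₗ cen
  map_lie' {x y} := by
    have hL' (x y z : L) : ⁅⁅x, y⁆, z⁆ = 0 := by rw [← lie_skew, hL, neg_zero]
    simp [lie_def, Fintype.linearCombination_apply, lie_sum, sum_lie, hL, hL',
      ← lie_sum_smul_sum_smul]

@[simp]
theorem lift_e {L : Type*} [LieRing L] [LieAlgebra R L] (hL : ∀ x y z : L, ⁅x, ⁅y, z⁆⁆ = 0)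
    (v : Fin 3 → L) (i : Fin 3) : lift hL v (e i : CrossModel R) = v i := by
  change Fintype.linearCombination R v (Pi.single i 1) +
    Fintype.linearCombination R (fun i => ⁅v (i + 1), v (i + 2)⁆) 0 = v i
  rw [Fintype.linearCombination_apply_single, one_smul, map_zero, add_zero]

/-- Both sides have the universal property of `FreeNilpotent` on three generators. -/
noncomputable def equivFreeNilpotent : CrossModel R ≃ₗ⁅R⁆ FreeNilpotent R (Fin 3) 2 :=
  let toFree : CrossModel R →ₗ⁅R⁆ FreeNilpotent R (Fin 3) 2 :=
    lift (lowerCentralSeries_two_eq_bot_iff.mp FreeNilpotent.lowerCentralSeries_eq_bot)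
      FreeNilpotent.of
  let ofFree : FreeNilpotent R (Fin 3) 2 →ₗ⁅R⁆ CrossModel R :=
    FreeNilpotent.lift (lowerCentralSeries_two_eq_bot_iff.mpr lie_lie_eq_zero) e
  have ofFree_comp_toFree : ofFree.comp toFree = .id := hom_ext fun i => by simp [toFree, ofFree]
  have toFree_comp_ofFree : toFree.comp ofFree = .id :=
    FreeNilpotent.hom_ext fun i => by simp [toFree, ofFree]
  { toFree with
    invFun := ofFree
    left_inv := LieHom.congr_fun ofFree_comp_toFree
    right_inv := LieHom.congr_fun toFree_comp_ofFree }

/-- The product determined by `e 0 · e 0 = e 1`, `e 0 · f 1 = -f 0`, `e 1 · e 2 = -f 0`. -/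
def cpa : CrossModel R →ₗ[R] CrossModel R →ₗ[R] CrossModel R :=
  LinearMap.mk₂ R
    (fun x y => (vec x 0 * vec y 0) • e 1 -
      (vec x 0 * cen y 1 + cen x 1 * vec y 0 + vec x 1 * vec y 2 + vec x 2 * vec y 1) • f 0)
    (fun x y z => by simp only [map_add, Pi.add_apply]; module)
    (fun a x y => by simp only [map_smul, Pi.smul_apply, smul_eq_mul]; module)
    (fun x y z => by simp only [map_add, Pi.add_apply]; module)
    (fun a x y => by simp only [map_smul, Pi.smul_apply, smul_eq_mul]; module)

theorem cpa_apply (x y : CrossModel R) :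
    cpa x y = (vec x 0 * vec y 0) • e 1 -
      (vec x 0 * cen y 1 + cen x 1 * vec y 0 + vec x 1 * vec y 2 + vec x 2 * vec y 1) • f 0 :=
  rfl

theorem cpa_comm (x y : CrossModel R) : cpa x y = cpa y x := by
  simp only [cpa_apply]
  module

theorem lie_e_one (x : CrossModel R) :
    ⁅x, (e 1 : CrossModel R)⁆ = vec x 0 • f 2 - vec x 2 • f 0 := by
  rw [lie_def, e, f, f, ← map_smul, ← map_smul, ← map_sub]
  congr 1
  ext j
  fin_cases j <;> simp [cross_apply]

theorem lie_f (x : CrossModel R) (i : Fin 3) : ⁅x, (f i : CrossModel R)⁆ = 0 := by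
  rw [← lie_e_succ, lie_lie_eq_zero]

theorem f_mem_center (i : Fin 3) : f i ∈ LieAlgebra.center R (CrossModel R) :=
  (LieModule.mem_maxTrivSubmodule R _ _ _).mpr fun x => lie_f x i

theorem f_ne_zero [Nontrivial R] (i : Fin 3) : (f i : CrossModel R) ≠ 0 := fun h =>
  one_ne_zero (α := R) <| by simpa [f] using congrFun (congrArg cen h) i

theorem lie_cpa (x y z : CrossModel R) :
    ⁅x, cpa y z⁆ = (vec y 0 * vec z 0) • (vec x 0 • f 2 - vec x 2 • f 0) := by
  rw [cpa_apply, lie_sub, lie_smul, lie_smul, lie_e_one, lie_f, smul_zero, sub_zero]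

theorem cpa_ofCen (x : CrossModel R) (w : Fin 3 → R) :
    cpa x (ofCen w) = -(vec x 0 * w 1) • f 0 := by
  simp [cpa_apply]

theorem cpa_f_zero (x : CrossModel R) : cpa x (f 0) = 0 := by
  simp [f, cpa_ofCen]

theorem cpa_e_one (x : CrossModel R) : cpa x (e 1) = -vec x 2 • f 0 := by
  simp [cpa_apply, e]

theorem cpa_lie (x y z : CrossModel R) :
    cpa x ⁅y, z⁆ = -(vec x 0 * (vec y 2 * vec z 0 - vec y 0 * vec z 2)) • f 0 := by
  rw [lie_def, cpa_ofCen, cross_apply, Matrix.cons_val_one, Matrix.cons_val_zero]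

theorem cpa_cpa (x y z : CrossModel R) :
    cpa x (cpa y z) = -(vec y 0 * vec z 0 * vec x 2) • f 0 := by
  rw [cpa_apply y, map_sub, map_smul, map_smul, cpa_e_one, cpa_f_zero, smul_zero, sub_zero,
    smul_smul, mul_neg]

theorem isCPAStructure_cpa : IsCPAStructure R (cpa (R := R)) where
  comm := cpa_comm
  bracket_mul x y z := by
    rw [cpa_comm, cpa_lie, cpa_cpa, cpa_cpa]
    module
  mul_bracket x y z := by
    rw [cpa_lie, ← lie_skew, lie_cpa, lie_cpa]
    module

theorem cpa_e_zero_f_one : cpa (e 0 : CrossModel R) (f 1) = -f 0 := by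
  simp [cpa_ofCen, e, f]

end CrossModel

section Surjective

variable {R L L' : Type*} [CommRing R] [LieRing L] [LieAlgebra R L] [LieRing L'] [LieAlgebra R L']

theorem apply_mem_center_of_surjective {φ : L →ₗ⁅R⁆ L'} (hφ : Function.Surjective φ) {z : L}
    (hz : z ∈ LieAlgebra.center R L) : φ z ∈ LieAlgebra.center R L' :=
  (LieModule.mem_maxTrivSubmodule R L' L' _).mpr <| hφ.forall.mpr fun x => by
    rw [← φ.map_lie, (LieModule.mem_maxTrivSubmodule R L L z).mp hz, map_zero]

theorem IsCPAStructure.of_surjective {φ : L →ₗ⁅R⁆ L'} (hφ : Function.Surjective φ)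
    {mul : L →ₗ[R] L →ₗ[R] L} {mul' : L' →ₗ[R] L' →ₗ[R] L'} (h : IsCPAStructure R mul)
    (hmul : ∀ x y, mul' (φ x) (φ y) = φ (mul x y)) : IsCPAStructure R mul' where
  comm := hφ.forall₂.mpr fun x y => by rw [hmul, hmul, h.comm]
  bracket_mul := hφ.forall₃.mpr fun x y z => by
    simp only [← φ.map_lie, hmul, h.bracket_mul, map_sub]
  mul_bracket := hφ.forall₃.mpr fun x y z => by
    simp only [← φ.map_lie, hmul, h.mul_bracket, map_add]

end Surjective

theorem exists_cpa_on_F32_not_annihilating_center_general (R : Type*) [CommRing R]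
    [Nontrivial R] :
    ∃ mul : FreeNilpotent R (Fin 3) 2 →ₗ[R]
        FreeNilpotent R (Fin 3) 2 →ₗ[R] FreeNilpotent R (Fin 3) 2,
      IsCPAStructure R mul ∧
        ∃ x z : FreeNilpotent R (Fin 3) 2,
          z ∈ LieAlgebra.center R (FreeNilpotent R (Fin 3) 2) ∧ mul x z ≠ 0 := by
  let φ := CrossModel.equivFreeNilpotent (R := R)
  let ψ := φ.toLinearEquiv
  let mul := ψ.arrowCongr (ψ.arrowCongr ψ) CrossModel.cpa
  have hmul (x y : CrossModel R) : mul (ψ x) (ψ y) = ψ (CrossModel.cpa x y) := by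
    simp only [mul, LinearEquiv.arrowCongr_apply, LinearEquiv.symm_apply_apply]
  refine ⟨mul, CrossModel.isCPAStructure_cpa.of_surjective φ.surjective hmul, ψ (.e 0), ψ (.f 1),
    apply_mem_center_of_surjective φ.surjective (CrossModel.f_mem_center 1), ?_⟩
  rw [hmul, CrossModel.cpa_e_zero_f_one, map_neg, neg_ne_zero, ψ.map_ne_zero_iff]
  exact CrossModel.f_ne_zero 0

/-- On the free-nilpotent Lie algebra `F_{3,2}` over a field of characteristic zero there
exists a CPA-structure with `𝔤 · Z(𝔤) ≠ 0`. -/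
theorem exists_cpa_on_F32_not_annihilating_center (K : Type*) [Field K] [CharZero K] :
    ∃ mul : FreeNilpotentLieAlgebra K 3 2 →ₗ[K]
        FreeNilpotentLieAlgebra K 3 2 →ₗ[K] FreeNilpotentLieAlgebra K 3 2,
      IsCPAStructure K mul ∧
        ∃ x z : FreeNilpotentLieAlgebra K 3 2,
          z ∈ LieAlgebra.center K (FreeNilpotentLieAlgebra K 3 2) ∧ mul x z ≠ 0 :=
  exists_cpa_on_F32_not_annihilating_center_general K
end

section
/- Let F be the free Lie algebra over a field K of characteristic zero on a set X of generators containing two distinct elements x_1 and x_2. If u, v ∈ F satisfy the linear equation [x_1, u] + [x_2, v] = 0, then u and v are contained in the Lie subalgebra of F generated by x_1 and x_2. -/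
/-!
Let `φ` be the canonical map from the free Lie algebra to the free associative algebra. Comparing
coefficients in `∑ x * φ (u x) = ∑ φ (u x) * x`, where `x` runs over a finite set `s` of letters,
shows that `φ (u x)` has the same coefficient at a word `y * w` as `φ (u y)` at the rotated word
`w * x`, and coefficient `0` at `y * w` if `y ∉ s`. Rotating a letter outside `s` to the front,
one sees that only words in the letters of `s` occur in `φ (u x)`.

To return to the free Lie algebra, replace each word by its right-normed bracket. By the
Dynkin–Specht–Wever theorem this turns `φ a` into `D a`, where `D` is the derivation fixing the
generators, so `D (u x)` lies in the Lie subalgebra `L` generated by `s`. The free Lie algebra is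
spanned by eigenvectors of `D` with eigenvalues `1, 2, …`, all invertible over a `ℚ`-algebra, and
`D` preserves `L`; hence `u x` itself lies in `L`.
-/

section LinearAlgebra

open Polynomial

variable {R M ι : Type*} [CommRing R] [AddCommGroup M] [Module R M]
  {f : Module.End R M} {N : Submodule R M}

lemma aeval_apply_mem_of_mem_invtSubmodule (hN : N ∈ f.invtSubmodule) (p : R[X]) {a : M}
    (ha : a ∈ N) : aeval f p a ∈ N := by
  rw [aeval_eq_sum_range, LinearMap.sum_apply]
  exact N.sum_mem fun i _ ↦ N.smul_mem _ (Module.End.pow_apply_mem_of_forall_mem i hN a ha)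

lemma exists_aeval_apply_eq_zero_of_mem_iSup_eigenspace {μ : ι → R} (hμ : ∀ i, IsUnit (μ i))
    {a : M} (ha : a ∈ ⨆ i, f.eigenspace (μ i)) :
    ∃ p : R[X], IsUnit (p.coeff 0) ∧ aeval f p a = 0 := by
  induction ha using Submodule.iSup_induction' with
  | mem i a ha =>
    refine ⟨X - C (μ i), by simpa using hμ i, ?_⟩
    simp [Module.End.mem_eigenspace_iff.1 ha]
  | zero => exact ⟨1, by simp⟩
  | add a b _ _ iha ihb =>
    obtain ⟨p, hp, hpa⟩ := iha
    obtain ⟨q, hq, hqb⟩ := ihb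
    refine ⟨p * q, by simpa only [mul_coeff_zero] using hp.mul hq, ?_⟩
    have hqa : aeval f (p * q) a = 0 := by
      rw [mul_comm, map_mul, Module.End.mul_apply, hpa, map_zero]
    have hpb : aeval f (p * q) b = 0 := by rw [map_mul, Module.End.mul_apply, hqb, map_zero]
    rw [map_add, hqa, hpb, add_zero]

lemma mem_of_apply_mem_of_mem_iSup_eigenspace {μ : ι → R} (hμ : ∀ i, IsUnit (μ i))
    (hN : N ∈ f.invtSubmodule) {a : M} (ha : a ∈ ⨆ i, f.eigenspace (μ i)) (hfa : f a ∈ N) :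
    a ∈ N := by
  obtain ⟨p, hp, hpa⟩ := exists_aeval_apply_eq_zero_of_mem_iSup_eigenspace hμ ha
  have h_split : aeval f p.divX (f a) + p.coeff 0 • a = 0 := by
    rw [← hpa]
    conv_rhs => rw [← p.divX_mul_X_add]
    simp [Module.algebraMap_end_apply]
  rw [← Submodule.smul_mem_iff_of_isUnit N hp, eq_neg_of_add_eq_zero_right h_split]
  exact N.neg_mem (aeval_apply_mem_of_mem_invtSubmodule hN _ hfa)

end LinearAlgebra

section LieDerivation

variable {R L : Type*} [CommRing R] [LieRing L] [LieAlgebra R L]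

lemma lie_mem_iSup_of_lie_mem_add {ι : Type*} [Add ι] {N : ι → Submodule R L}
    (hN : ∀ i j, ∀ a ∈ N i, ∀ b ∈ N j, ⁅a, b⁆ ∈ N (i + j)) {a b : L}
    (ha : a ∈ ⨆ i, N i) (hb : b ∈ ⨆ i, N i) : ⁅a, b⁆ ∈ ⨆ i, N i := by
  induction ha using Submodule.iSup_induction' with
  | zero => simp
  | add a a' _ _ iha iha' => simpa only [add_lie] using add_mem iha iha'
  | mem i a ha =>
    induction hb using Submodule.iSup_induction' with
    | zero => simp
    | add b b' _ _ ihb ihb' => simpa only [lie_add] using add_mem ihb ihb'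
    | mem j b hb => exact Submodule.mem_iSup_of_mem (i + j) (hN i j a ha b hb)

variable (D : LieDerivation R L L) {s : Set L}

lemma lie_mem_eigenspace_add {μ ν : R} {a b : L}
    (ha : a ∈ Module.End.eigenspace D.toLinearMap μ)
    (hb : b ∈ Module.End.eigenspace D.toLinearMap ν) :
    ⁅a, b⁆ ∈ Module.End.eigenspace D.toLinearMap (μ + ν) := by
  rw [Module.End.mem_eigenspace_iff, LieDerivation.coeFn_coe] at *
  rw [D.apply_lie_eq_add, ha, hb, lie_smul, smul_lie, add_comm, add_smul]

lemma iSup_eigenspace_eq_top_of_lieSpan_eq_top (hs : LieSubalgebra.lieSpan R L s = ⊤)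
    (hD : ∀ x ∈ s, D x = x) : ⨆ n : ℕ+, Module.End.eigenspace D.toLinearMap ((n : ℕ) : R) = ⊤ := by
  refine eq_top_iff.2 fun a _ ↦ ?_
  have ha : a ∈ LieSubalgebra.lieSpan R L s := hs ▸ LieSubalgebra.mem_top a
  induction ha using LieSubalgebra.lieSpan_induction with
  | mem x hx => exact Submodule.mem_iSup_of_mem 1 (by simp [hD x hx])
  | zero => exact zero_mem _
  | add a b _ _ iha ihb => exact add_mem (iha trivial) (ihb trivial)
  | smul r a _ iha => exact Submodule.smul_mem _ r (iha trivial)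
  | lie a b _ _ iha ihb =>
    refine lie_mem_iSup_of_lie_mem_add (fun m n a ha b hb ↦ ?_) (iha trivial) (ihb trivial)
    simpa using lie_mem_eigenspace_add D ha hb

lemma lieSpan_mem_invtSubmodule (hD : ∀ x ∈ s, D x ∈ LieSubalgebra.lieSpan R L s) :
    (LieSubalgebra.lieSpan R L s).toSubmodule ∈ Module.End.invtSubmodule D.toLinearMap := by
  intro a ha
  change D a ∈ LieSubalgebra.lieSpan R L s
  induction ha using LieSubalgebra.lieSpan_induction with
  | mem x hx => exact hD x hx
  | zero => simp
  | add a b _ _ iha ihb => simpa only [map_add] using add_mem iha ihb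
  | smul r a _ iha => simpa only [map_smul] using LieSubalgebra.smul_mem _ r iha
  | lie a b ha hb iha ihb =>
    rw [D.apply_lie_eq_add]
    exact add_mem (LieSubalgebra.lie_mem _ ha ihb) (LieSubalgebra.lie_mem _ iha hb)

end LieDerivation

section Words

open MonoidAlgebra

variable {R X : Type*} [Semiring R]

lemma coeff_single_of_mul [DecidableEq X] (x y : X) (f : R[FreeMonoid X]) (w : FreeMonoid X) :
    (single (FreeMonoid.of x) 1 * f).coeff (FreeMonoid.of y * w) =
      if x = y then f.coeff w else 0 := by
  split_ifs with h
  · simp [h]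
  · exact coeff_single_mul_of_forall_mul_ne _ _ fun _ h_eq ↦ h (List.cons.inj h_eq).1

lemma coeff_mul_single_of [DecidableEq X] (x y : X) (f : R[FreeMonoid X]) (w : FreeMonoid X) :
    (f * single (FreeMonoid.of x) 1).coeff (w * FreeMonoid.of y) =
      if x = y then f.coeff w else 0 := by
  split_ifs with h
  · simp [h]
  · refine coeff_mul_single_of_forall_mul_ne _ _ fun d h_eq ↦ h ?_
    exact List.singleton_inj.1 (List.append_inj_right' h_eq rfl)

variable {s : Finset X} {f : X → R[FreeMonoid X]}

lemma coeff_of_mul_eq_of_sum_mul_comm [DecidableEq X]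
    (h : ∑ x ∈ s, single (FreeMonoid.of x) 1 * f x = ∑ x ∈ s, f x * single (FreeMonoid.of x) 1)
    {x : X} (hx : x ∈ s) (y : X) (w : FreeMonoid X) :
    (f x).coeff (FreeMonoid.of y * w) = if y ∈ s then (f y).coeff (w * FreeMonoid.of x) else 0 := by
  have h_coeff := congrArg (fun g ↦ g.coeff (FreeMonoid.of y * w * FreeMonoid.of x)) h
  simp only [coeff_sum, Finsupp.finsetSum_apply, coeff_mul_single_of] at h_coeff
  simp only [mul_assoc, coeff_single_of_mul, Finset.sum_ite_eq', hx, if_true] at h_coeff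
  exact h_coeff.symm

lemma mem_supported_of_sum_mul_comm
    (h : ∑ x ∈ s, single (FreeMonoid.of x) 1 * f x = ∑ x ∈ s, f x * single (FreeMonoid.of x) 1)
    {x : X} (hx : x ∈ s) : f x ∈ supported R R {w | ∀ y ∈ w, y ∈ s} := by
  classical
  have coeff_eq_zero {z : X} (hz : z ∉ s) (p : FreeMonoid X) :
      ∀ x ∈ s, ∀ q, (f x).coeff (p * (FreeMonoid.of z * q)) = 0 := by
    induction p using FreeMonoid.inductionOn' with
    | one =>
      intro x hx q
      rw [one_mul, coeff_of_mul_eq_of_sum_mul_comm h hx, if_neg hz]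
    | of_mul y p ih =>
      intro x hx q
      rw [mul_assoc, coeff_of_mul_eq_of_sum_mul_comm h hx]
      split_ifs with hy
      · simpa only [mul_assoc] using ih y hy (q * FreeMonoid.of x)
      · rfl
  refine mem_supported'.2 fun w hw ↦ ?_
  obtain ⟨z, hzw, hz⟩ : ∃ z ∈ w, z ∉ s := by simpa using hw
  obtain ⟨p, q, rfl⟩ := List.append_of_mem hzw
  exact coeff_eq_zero hz (FreeMonoid.ofList p) x hx (FreeMonoid.ofList q)

end Words

section Dynkin

open FreeLieAlgebra
open MonoidAlgebra hiding of lift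

attribute [local instance] LieRing.ofAssociativeRing

variable (R : Type*) {X : Type*} [CommRing R]

lemma lieSpan_range_of_eq_top :
    LieSubalgebra.lieSpan R (FreeLieAlgebra R X) (Set.range (of R)) = ⊤ := by
  let S := LieSubalgebra.lieSpan R (FreeLieAlgebra R X) (Set.range (of R))
  let toS : FreeLieAlgebra R X →ₗ⁅R⁆ S :=
    lift R fun x ↦ ⟨of R x, LieSubalgebra.subset_lieSpan ⟨x, rfl⟩⟩
  have h : S.incl.comp toS = LieHom.id := by
    ext x
    simp [toS]
  refine eq_top_iff.2 fun a _ ↦ ?_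
  have h_apply : (toS a : FreeLieAlgebra R X) = a := LieHom.congr_fun h a
  exact h_apply ▸ (toS a).2

variable (X) in
/-- The canonical map from the free Lie algebra to the free associative algebra. The latter is
realised as the monoid algebra of the free monoid, so as to have coefficients of words at hand. -/
noncomputable def toFreeAssociative : FreeLieAlgebra R X →ₗ⁅R⁆ R[FreeMonoid X] :=
  lift R fun x ↦ single (FreeMonoid.of x) 1

/-- The right-normed bracket `⁅x₁, ⁅x₂, …, ⁅xₙ₋₁, xₙ⁆ … ⁆⁆` of a list of generators of the free Lie
algebra; the empty list is sent to `0`. -/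
noncomputable def rightNormedBracket : List X → FreeLieAlgebra R X
  | [] => 0
  | [x] => of R x
  | x :: y :: l => ⁅of R x, rightNormedBracket (y :: l)⁆

variable (X) in
/-- The Dynkin map from the free associative algebra to the free Lie algebra: the linear map sending
each word to its right-normed bracket. -/
noncomputable def dynkinMap : R[FreeMonoid X] →ₗ[R] FreeLieAlgebra R X :=
  Finsupp.linearCombination R (fun w : FreeMonoid X ↦ rightNormedBracket R w.toList) ∘ₗ
    (coeffLinearEquiv R).toLinearMap

variable {R}

@[simp]
lemma toFreeAssociative_of (x : X) :
    toFreeAssociative R X (of R x) = single (FreeMonoid.of x) 1 := by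
  simp [toFreeAssociative]

@[simp]
lemma dynkinMap_single (w : FreeMonoid X) (r : R) :
    dynkinMap R X (single w r) = r • rightNormedBracket R w.toList := by
  simp [dynkinMap]

lemma rightNormedBracket_mem_lieSpan {s : Set X} {l : List X} (hl : ∀ x ∈ l, x ∈ s) :
    rightNormedBracket R l ∈ LieSubalgebra.lieSpan R (FreeLieAlgebra R X) (of R '' s) := by
  have of_mem {x : X} (hx : x ∈ s) :=
    LieSubalgebra.subset_lieSpan (R := R) (Set.mem_image_of_mem (of R) hx)
  induction l using rightNormedBracket.induct with
  | case1 => exact zero_mem _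
  | case2 x => exact of_mem (hl x (by simp))
  | case3 x y l ih =>
    exact LieSubalgebra.lie_mem _ (of_mem (hl x (by simp)))
      (ih fun z hz ↦ hl z (List.mem_cons_of_mem x hz))

lemma dynkinMap_mem_lieSpan {s : Set X} {f : R[FreeMonoid X]}
    (hf : f ∈ supported R R {w | ∀ x ∈ w, x ∈ s}) :
    dynkinMap R X f ∈ LieSubalgebra.lieSpan R (FreeLieAlgebra R X) (of R '' s) := by
  rw [supported_eq_span_single] at hf
  revert f
  change Submodule.span R _ ≤ (LieSubalgebra.lieSpan R _ _).toSubmodule.comap (dynkinMap R X)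
  rw [Submodule.span_le]
  rintro _ ⟨w, hw, rfl⟩
  simpa using rightNormedBracket_mem_lieSpan (l := w.toList) hw

lemma dynkinMap_single_of_mul (x : X) (f : R[FreeMonoid X]) :
    dynkinMap R X (single (FreeMonoid.of x) 1 * f) =
      ⁅of R x, dynkinMap R X f⁆ + f.coeff 1 • of R x := by
  induction f using MonoidAlgebra.induction_linear with
  | zero => simp
  | add f g ihf ihg =>
    simp only [mul_add, map_add, ihf, ihg, lie_add, coeff_add, Finsupp.add_apply, add_smul]
    abel
  | single w r =>
    cases w using FreeMonoid.casesOn with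
    | one => simp [rightNormedBracket]
    | of_mul y w => simp [single_mul_single, rightNormedBracket]

lemma coeff_one_toFreeAssociative_mul (a : FreeLieAlgebra R X) (f : R[FreeMonoid X]) :
    (toFreeAssociative R X a * f).coeff 1 = 0 := by
  have ha := lieSpan_range_of_eq_top R ▸ LieSubalgebra.mem_top (R := R) a
  induction ha using LieSubalgebra.lieSpan_induction generalizing f with
  | mem _ hx =>
    obtain ⟨x, rfl⟩ := hx
    rw [toFreeAssociative_of]
    exact coeff_single_mul_of_forall_mul_ne _ _ fun w ↦ List.cons_ne_nil x w.toList
  | zero => simp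
  | add a b _ _ iha ihb => simp [add_mul, iha, ihb]
  | smul r a _ iha => simp [iha]
  | lie a b _ _ iha ihb =>
    simp [LieRing.of_associative_ring_bracket, sub_mul, mul_assoc, iha, ihb]

lemma coeff_one_toFreeAssociative (a : FreeLieAlgebra R X) :
    (toFreeAssociative R X a).coeff 1 = 0 := by
  simpa using coeff_one_toFreeAssociative_mul a 1

lemma dynkinMap_toFreeAssociative_mul (a : FreeLieAlgebra R X) (f : R[FreeMonoid X]) :
    dynkinMap R X (toFreeAssociative R X a * f) =
      ⁅a, dynkinMap R X f⁆ + f.coeff 1 • dynkinMap R X (toFreeAssociative R X a) := by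
  have ha := lieSpan_range_of_eq_top R ▸ LieSubalgebra.mem_top (R := R) a
  induction ha using LieSubalgebra.lieSpan_induction generalizing f with
  | mem _ hx =>
    obtain ⟨x, rfl⟩ := hx
    simp [dynkinMap_single_of_mul, rightNormedBracket]
  | zero => simp
  | add a b _ _ iha ihb =>
    simp only [map_add, add_mul, iha, ihb, add_lie, smul_add]
    abel
  | smul r a _ iha => simp [iha, smul_comm r]
  | lie a b _ _ iha ihb =>
    have lie_eq : dynkinMap R X (toFreeAssociative R X ⁅a, b⁆) =
        ⁅a, dynkinMap R X (toFreeAssociative R X b)⁆ -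
          ⁅b, dynkinMap R X (toFreeAssociative R X a)⁆ := by
      simp [LieRing.of_associative_ring_bracket, iha, ihb, coeff_one_toFreeAssociative]
    rw [lie_eq, LieHom.map_lie, LieRing.of_associative_ring_bracket, sub_mul, mul_assoc, mul_assoc,
      map_sub, iha, ihb, ihb, iha]
    simp only [coeff_one_toFreeAssociative_mul, zero_smul, add_zero, lie_add, lie_smul, lie_lie,
      smul_sub]
    abel

variable (R X) in
/-- The derivation of the free Lie algebra that fixes the generators, and hence multiplies each Lie
word by its degree. It is encoded as the composite of the canonical map to the free associative
algebra with the Dynkin map; that this is a derivation is the Dynkin–Specht–Wever theorem. -/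
noncomputable def dynkinDerivation : LieDerivation R (FreeLieAlgebra R X) (FreeLieAlgebra R X) where
  toLinearMap := dynkinMap R X ∘ₗ (toFreeAssociative R X).toLinearMap
  leibniz' a b := by
    simp [LieRing.of_associative_ring_bracket, dynkinMap_toFreeAssociative_mul,
      coeff_one_toFreeAssociative]

lemma dynkinDerivation_apply (a : FreeLieAlgebra R X) :
    dynkinDerivation R X a = dynkinMap R X (toFreeAssociative R X a) := rfl

lemma dynkinDerivation_of (x : X) : dynkinDerivation R X (of R x) = of R x := by
  simp [dynkinDerivation_apply, rightNormedBracket]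

theorem mem_lieSpan_of_toFreeAssociative_mem_supported [Algebra ℚ R] {s : Set X}
    {a : FreeLieAlgebra R X}
    (ha : toFreeAssociative R X a ∈ supported R R {w | ∀ x ∈ w, x ∈ s}) :
    a ∈ LieSubalgebra.lieSpan R (FreeLieAlgebra R X) (of R '' s) := by
  have isUnit_cast (n : ℕ+) : IsUnit ((n : ℕ) : R) := by
    simpa using (IsUnit.mk0 ((n : ℕ) : ℚ) (by simp)).map (algebraMap ℚ R)
  have h_top := iSup_eigenspace_eq_top_of_lieSpan_eq_top (dynkinDerivation R X)
    (lieSpan_range_of_eq_top R) (by rintro _ ⟨x, rfl⟩; exact dynkinDerivation_of x)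
  have h_invt := lieSpan_mem_invtSubmodule (dynkinDerivation R X) (s := of R '' s) (by
    rintro _ ⟨x, hx, rfl⟩
    rw [dynkinDerivation_of]
    exact LieSubalgebra.subset_lieSpan ⟨x, hx, rfl⟩)
  exact mem_of_apply_mem_of_mem_iSup_eigenspace isUnit_cast h_invt (h_top ▸ Submodule.mem_top)
    (dynkinMap_mem_lieSpan ha)

theorem free_lie_linear_equation_inner_solutions_general [Algebra ℚ R] {s : Finset X}
    {u : X → FreeLieAlgebra R X} (h : ∑ x ∈ s, ⁅of R x, u x⁆ = 0) {x : X} (hx : x ∈ s) :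
    u x ∈ LieSubalgebra.lieSpan R (FreeLieAlgebra R X) (of R '' s) := by
  have h_comm : ∑ x ∈ s, single (FreeMonoid.of x) 1 * toFreeAssociative R X (u x) =
      ∑ x ∈ s, toFreeAssociative R X (u x) * single (FreeMonoid.of x) 1 := by
    rw [← sub_eq_zero, ← Finset.sum_sub_distrib]
    simpa [LieRing.of_associative_ring_bracket] using congrArg (toFreeAssociative R X) h
  exact mem_lieSpan_of_toFreeAssociative_mem_supported (mem_supported_of_sum_mul_comm h_comm hx)

end Dynkin

/-- (Remeslennikov–Stöhr) Let `F` be the free Lie algebra on a set `X` containing two distinct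
elements `x₁, x₂`. If `u, v ∈ F` satisfy `⁅x₁, u⁆ + ⁅x₂, v⁆ = 0`, then `u` and `v` lie in the
free subalgebra of `F` generated by `x₁` and `x₂`. -/
theorem free_lie_linear_equation_inner_solutions
    (K : Type*) [Field K] [CharZero K] (X : Type*) (x₁ x₂ : X) (hx : x₁ ≠ x₂)
    (u v : FreeLieAlgebra K X)
    (h : ⁅FreeLieAlgebra.of K x₁, u⁆ + ⁅FreeLieAlgebra.of K x₂, v⁆ = 0) :
    u ∈ LieSubalgebra.lieSpan K (FreeLieAlgebra K X)
        {FreeLieAlgebra.of K x₁, FreeLieAlgebra.of K x₂} ∧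
    v ∈ LieSubalgebra.lieSpan K (FreeLieAlgebra K X)
        {FreeLieAlgebra.of K x₁, FreeLieAlgebra.of K x₂} := by
  classical
  have h_mem x := free_lie_linear_equation_inner_solutions_general (s := {x₁, x₂})
    (u := fun x ↦ if x = x₁ then u else v) (x := x) (by simpa [Finset.sum_pair hx, hx.symm] using h)
  exact ⟨by simpa [Set.image_pair] using h_mem x₁,
    by simpa [Set.image_pair, hx.symm] using h_mem x₂⟩
end
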